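/- arXiv:math/9910142 — 8 statements merged into one kernel-verified Lean document; each statement's English description precedes it below -/
import Mathlib

section
/- Let α ∈ ℝ, let D ⊆ ℝ² be open, and let u : ℝ² → ℝ be C² on D and satisfy the Țițeica PDE with parameter α at every point of D. Then for every ε ∈ ℝ the function v(x,y) = e^{-ε} · u(e^{-ε} x, y) is C² and satisfies the Țițeica PDE with the same parameter α at every point (x,y) such that (e^{-ε} x, y) ∈ D. -/
/-- Partial derivative with respect to the first variable. -/
noncomputable def pdx (u : ℝ × ℝ → ℝ) (p : ℝ × ℝ) : ℝ :=
  deriv (fun x => u (x, p.2)) p.1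

/-- Partial derivative with respect to the second variable. -/
noncomputable def pdy (u : ℝ × ℝ → ℝ) (p : ℝ × ℝ) : ℝ :=
  deriv (fun y => u (p.1, y)) p.2

/-- The Țițeica PDE with parameter `α` holds for `u` at the point `p`:
`u_xx · u_yy − u_xy² = α · (x·u_x + y·u_y − u)⁴`. -/
def TiteicaPDE (α : ℝ) (u : ℝ × ℝ → ℝ) (p : ℝ × ℝ) : Prop :=
  pdx (pdx u) p * pdy (pdy u) p - (pdy (pdx u) p) ^ 2
    = α * (p.1 * pdx u p + p.2 * pdy u p - u p) ^ 4

/-!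
Put `v(x, y) = k u(a x, b y)`. Each derivative in `x` (resp. `y`) brings out a factor `a`
(resp. `b`), so the Hessian determinant is multiplied by `k² (a b)²`, while `x ∂/∂x` and `y ∂/∂y`
commute with the rescaling, so `x u_x + y u_y - u` is multiplied by `k`. The two sides of the PDE
thus scale by `k² (a b)²` and `k⁴`, which agree when `k² = (a b)²`. The flow of `X₁` is the case
`a = k = e^{-ε}`, `b = 1`.
-/

/-- The function `(x, y) ↦ k · u(a x, b y)`: the action on functions of the diagonal scalings of
the variables `(x, y, u)`, with `a` and `b` scaling the arguments and `k` the value. -/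
def rescale (k a b : ℝ) (u : ℝ × ℝ → ℝ) : ℝ × ℝ → ℝ :=
  fun p => k * u (a * p.1, b * p.2)

section Rescale

variable (k a b : ℝ) (u : ℝ × ℝ → ℝ)

theorem rescale_one_right : rescale k a 1 u = fun p => k * u (a * p.1, p.2) := by
  funext p
  rw [rescale, one_mul]

theorem pdx_rescale : pdx (rescale k a b u) = rescale (k * a) a b (pdx u) := by
  funext p
  simp only [pdx, rescale]
  rw [deriv_const_mul_field, deriv_comp_mul_left a (fun x => u (x, b * p.2)), smul_eq_mul,
    mul_assoc]

theorem pdy_rescale : pdy (rescale k a b u) = rescale (k * b) a b (pdy u) := by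
  funext p
  simp only [pdy, rescale]
  rw [deriv_const_mul_field, deriv_comp_mul_left b (fun y => u (a * p.1, y)), smul_eq_mul,
    mul_assoc]

end Rescale

theorem contDiffOn_rescale {n : WithTop ℕ∞} {u : ℝ × ℝ → ℝ} {D : Set (ℝ × ℝ)}
    (hu : ContDiffOn ℝ n u D) (k a b : ℝ) :
    ContDiffOn ℝ n (rescale k a b u) {p | (a * p.1, b * p.2) ∈ D} :=
  have dilation_contDiff : ContDiff ℝ n fun p : ℝ × ℝ => (a * p.1, b * p.2) := by fun_prop
  contDiffOn_const.mul (hu.comp dilation_contDiff.contDiffOn fun _ hp => hp)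

theorem titeicaPDE_rescale {α k a b : ℝ} {u : ℝ × ℝ → ℝ} {p : ℝ × ℝ}
    (hk : k ^ 2 = (a * b) ^ 2) (hu : TiteicaPDE α u (a * p.1, b * p.2)) :
    TiteicaPDE α (rescale k a b u) p := by
  set v := rescale k a b u with hv
  set q : ℝ × ℝ := (a * p.1, b * p.2) with hq
  have hessian_det :
      pdx (pdx v) p * pdy (pdy v) p - pdy (pdx v) p ^ 2 =
        k ^ 2 * (a * b) ^ 2 * (pdx (pdx u) q * pdy (pdy u) q - pdy (pdx u) q ^ 2) := by
    simp only [hv, hq, pdx_rescale, pdy_rescale, rescale]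
    ring
  have euler_sub_self :
      p.1 * pdx v p + p.2 * pdy v p - v p = k * (q.1 * pdx u q + q.2 * pdy u q - u q) := by
    simp only [hv, hq, pdx_rescale, pdy_rescale, rescale]
    ring
  unfold TiteicaPDE at hu ⊢
  rw [hessian_det, euler_sub_self, ← hk, hu]
  ring

theorem titeica_symmetry_X1_general {α k a b : ℝ} (hk : k ^ 2 = (a * b) ^ 2)
    {D : Set (ℝ × ℝ)} {u : ℝ × ℝ → ℝ} (hu : ContDiffOn ℝ 2 u D)
    (hsol : ∀ p ∈ D, TiteicaPDE α u p) :
    ContDiffOn ℝ 2 (rescale k a b u) {p | (a * p.1, b * p.2) ∈ D} ∧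
      ∀ p : ℝ × ℝ, (a * p.1, b * p.2) ∈ D → TiteicaPDE α (rescale k a b u) p :=
  ⟨contDiffOn_rescale hu k a b, fun _ hp => titeicaPDE_rescale hk (hsol _ hp)⟩

/-- The scaling group generated by `X₁ = x ∂/∂x − u ∂/∂u` is a symmetry group of the
Țițeica PDE: if `u` is a C² solution on the open set `D`, then for every `ε` the function
`v(x,y) = e^{-ε} · u(e^{-ε} x, y)` is C² and solves the PDE wherever `(e^{-ε} x, y) ∈ D`. -/
theorem titeica_symmetry_X1 (α ε : ℝ) (D : Set (ℝ × ℝ)) (hD : IsOpen D)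
    (u : ℝ × ℝ → ℝ) (hu : ContDiffOn ℝ 2 u D)
    (hsol : ∀ p ∈ D, TiteicaPDE α u p) :
    ContDiffOn ℝ 2 (fun p : ℝ × ℝ => Real.exp (-ε) * u (Real.exp (-ε) * p.1, p.2))
      {p : ℝ × ℝ | (Real.exp (-ε) * p.1, p.2) ∈ D} ∧
    ∀ p : ℝ × ℝ, (Real.exp (-ε) * p.1, p.2) ∈ D →
      TiteicaPDE α (fun q : ℝ × ℝ => Real.exp (-ε) * u (Real.exp (-ε) * q.1, q.2)) p := by
  have hk : Real.exp (-ε) ^ 2 = (Real.exp (-ε) * 1) ^ 2 := by rw [mul_one]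
  simpa only [rescale_one_right, one_mul] using titeica_symmetry_X1_general hk hu hsol
end

section
/- Let α ∈ ℝ, let D ⊆ ℝ² be open, and let u : ℝ² → ℝ be C² on D and satisfy the Țițeica PDE with parameter α at every point of D. Then for every ε ∈ ℝ the function v(x,y) = e^{-ε} · u(x, e^{-ε} y) is C² and satisfies the Țițeica PDE with the same parameter α at every point (x,y) such that (x, e^{-ε} y) ∈ D. -/
/-!
For `v (x, y) = k · u (a x, b y)` the chain rule multiplies the Hessian determinant by
`k² (a b)²` and `x·u_x + y·u_y − u` by `k`. The two sides of the PDE thus scale by `k² (a b)²` and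
`k⁴`, which agree when `k² = (a b)²`; the group generated by `X₂` is the case `a = 1`,
`k = b = e^{-ε}`.
-/

/-- Determinant of the Hessian, the Monge–Ampère left-hand side of the Țițeica PDE. The mixed entry
is taken as `u_xy` only, in the order in which `TiteicaPDE` differentiates. -/
noncomputable def hessianDet (u : ℝ × ℝ → ℝ) (p : ℝ × ℝ) : ℝ :=
  pdx (pdx u) p * pdy (pdy u) p - (pdy (pdx u) p) ^ 2

/-- The Legendre transform `x·u_x + y·u_y − u`, written in the variables `(x, y)` rather than in the
dual variables `(u_x, u_y)`. The right-hand side of the Țițeica PDE is `α` times its fourth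
power. -/
noncomputable def legendreTransform (u : ℝ × ℝ → ℝ) (p : ℝ × ℝ) : ℝ :=
  p.1 * pdx u p + p.2 * pdy u p - u p

theorem titeicaPDE_iff {α : ℝ} {u : ℝ × ℝ → ℝ} {p : ℝ × ℝ} :
    TiteicaPDE α u p ↔ hessianDet u p = α * legendreTransform u p ^ 4 :=
  Iff.rfl

section Scaling

variable (k a b : ℝ) (u : ℝ × ℝ → ℝ)

theorem pdx_const_mul : pdx (fun q => k * u q) = fun q => k * pdx u q := by
  funext p
  exact deriv_const_mul_field k

theorem pdy_const_mul : pdy (fun q => k * u q) = fun q => k * pdy u q := by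
  funext p
  exact deriv_const_mul_field k

theorem pdx_comp_scale :
    pdx (fun q => u (a * q.1, b * q.2)) = fun q => a * pdx u (a * q.1, b * q.2) := by
  funext p
  exact deriv_comp_mul_left a (fun x => u (x, b * p.2)) p.1

theorem pdy_comp_scale :
    pdy (fun q => u (a * q.1, b * q.2)) = fun q => b * pdy u (a * q.1, b * q.2) := by
  funext p
  exact deriv_comp_mul_left b (fun y => u (a * p.1, y)) p.2

theorem hessianDet_const_mul_comp_scale (p : ℝ × ℝ) :
    hessianDet (fun q => k * u (a * q.1, b * q.2)) p =
      k ^ 2 * (a * b) ^ 2 * hessianDet u (a * p.1, b * p.2) := by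
  simp only [hessianDet, pdx_const_mul, pdy_const_mul, pdx_comp_scale, pdy_comp_scale]
  ring

theorem legendreTransform_const_mul_comp_scale (p : ℝ × ℝ) :
    legendreTransform (fun q => k * u (a * q.1, b * q.2)) p =
      k * legendreTransform u (a * p.1, b * p.2) := by
  simp only [legendreTransform, pdx_const_mul, pdy_const_mul, pdx_comp_scale, pdy_comp_scale]
  ring

end Scaling

theorem TiteicaPDE.const_mul_comp_scale {α k a b : ℝ} (hk : k ^ 2 = (a * b) ^ 2)
    {u : ℝ × ℝ → ℝ} {p : ℝ × ℝ} (h : TiteicaPDE α u (a * p.1, b * p.2)) :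
    TiteicaPDE α (fun q => k * u (a * q.1, b * q.2)) p := by
  rw [titeicaPDE_iff] at h ⊢
  calc hessianDet (fun q => k * u (a * q.1, b * q.2)) p
      = k ^ 2 * (a * b) ^ 2 * hessianDet u (a * p.1, b * p.2) :=
        hessianDet_const_mul_comp_scale k a b u p
    _ = k ^ 2 * k ^ 2 * (α * legendreTransform u (a * p.1, b * p.2) ^ 4) := by rw [hk, h]
    _ = α * (k * legendreTransform u (a * p.1, b * p.2)) ^ 4 := by ring
    _ = α * legendreTransform (fun q => k * u (a * q.1, b * q.2)) p ^ 4 := by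
        rw [legendreTransform_const_mul_comp_scale]

theorem titeica_symmetry_X2_general {α k a b : ℝ} (hk : k ^ 2 = (a * b) ^ 2)
    {D : Set (ℝ × ℝ)} {u : ℝ × ℝ → ℝ} (hu : ContDiffOn ℝ 2 u D)
    (hsol : ∀ p ∈ D, TiteicaPDE α u p) :
    ContDiffOn ℝ 2 (fun p : ℝ × ℝ => k * u (a * p.1, b * p.2))
      {p : ℝ × ℝ | (a * p.1, b * p.2) ∈ D} ∧
    ∀ p : ℝ × ℝ, (a * p.1, b * p.2) ∈ D →
      TiteicaPDE α (fun q : ℝ × ℝ => k * u (a * q.1, b * q.2)) p := by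
  have hscale : ContDiff ℝ 2 (fun p : ℝ × ℝ => (a * p.1, b * p.2)) := by fun_prop
  exact ⟨contDiffOn_const.mul (hu.comp hscale.contDiffOn fun _ hp => hp),
    fun p hp => (hsol _ hp).const_mul_comp_scale hk⟩

/-- The scaling group generated by `X₂ = y ∂/∂y − u ∂/∂u` is a symmetry group of the
Țițeica PDE: if `u` is a C² solution on the open set `D`, then for every `ε` the function
`v(x,y) = e^{-ε} · u(x, e^{-ε} y)` is C² and solves the PDE wherever `(x, e^{-ε} y) ∈ D`. -/
theorem titeica_symmetry_X2 (α ε : ℝ) (D : Set (ℝ × ℝ)) (hD : IsOpen D)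
    (u : ℝ × ℝ → ℝ) (hu : ContDiffOn ℝ 2 u D)
    (hsol : ∀ p ∈ D, TiteicaPDE α u p) :
    ContDiffOn ℝ 2 (fun p : ℝ × ℝ => Real.exp (-ε) * u (p.1, Real.exp (-ε) * p.2))
      {p : ℝ × ℝ | (p.1, Real.exp (-ε) * p.2) ∈ D} ∧
    ∀ p : ℝ × ℝ, (p.1, Real.exp (-ε) * p.2) ∈ D →
      TiteicaPDE α (fun q : ℝ × ℝ => Real.exp (-ε) * u (q.1, Real.exp (-ε) * q.2)) p := by
  simpa only [one_mul] using
    titeica_symmetry_X2_general (k := Real.exp (-ε)) (a := 1) (by rw [one_mul]) hu hsol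
end

section
/- Let α ∈ ℝ, let D ⊆ ℝ² be open, and let u : ℝ² → ℝ be C² on D and satisfy the Țițeica PDE with parameter α at every point of D. Then for every ε ∈ ℝ the function v(x,y) = u(x − ε·y, y) is C² and satisfies the Țițeica PDE with the same parameter α at every point (x,y) such that (x − ε·y, y) ∈ D. -/
open Filter Topology Module

section Hessian

variable {𝕜 E F G : Type*} [NontriviallyNormedField 𝕜] [NormedAddCommGroup E] [NormedSpace 𝕜 E]
  [NormedAddCommGroup F] [NormedSpace 𝕜 F] [NormedAddCommGroup G] [NormedSpace 𝕜 G]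

lemma eventually_differentiableAt_of_contDiffAt_two {u : E → G} {p : E}
    (hu : ContDiffAt 𝕜 2 u p) : ∀ᶠ q in 𝓝 p, DifferentiableAt 𝕜 u q :=
  (hu.eventually (by simp)).mono fun _ hq => hq.differentiableAt two_ne_zero

lemma differentiableAt_fderiv_of_contDiffAt_two {u : E → G} {p : E}
    (hu : ContDiffAt 𝕜 2 u p) : DifferentiableAt 𝕜 (fderiv 𝕜 u) p :=
  (hu.fderiv_right (m := 1) one_add_one_eq_two.le).differentiableAt one_ne_zero

lemma differentiableAt_fderiv_apply {u : E → G} {p : E}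
    (hu : DifferentiableAt 𝕜 (fderiv 𝕜 u) p) (w : E) :
    DifferentiableAt 𝕜 (fun q => fderiv 𝕜 u q w) p :=
  hu.clm_apply (differentiableAt_const w)

lemma fderiv_fderiv_apply {u : E → G} {p : E} (hu : DifferentiableAt 𝕜 (fderiv 𝕜 u) p) (v w : E) :
    fderiv 𝕜 (fun q => fderiv 𝕜 u q w) p v = fderiv 𝕜 (fderiv 𝕜 u) p v w := by
  simp [fderiv_clm_apply hu (differentiableAt_const w)]

lemma fderiv_comp_clm_apply {u : F → G} (L : E →L[𝕜] F) {p : E} (hu : DifferentiableAt 𝕜 u (L p))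
    (v : E) : fderiv 𝕜 (u ∘ L) p v = fderiv 𝕜 u (L p) (L v) := by
  rw [fderiv_comp p hu L.differentiableAt, L.fderiv, ContinuousLinearMap.comp_apply]

lemma fderiv_fderiv_comp_clm_apply {u : F → G} (L : E →L[𝕜] F) {p : E}
    (hu : ContDiffAt 𝕜 2 u (L p)) (v w : E) :
    fderiv 𝕜 (fderiv 𝕜 (u ∘ L)) p v w = fderiv 𝕜 (fderiv 𝕜 u) (L p) (L v) (L w) := by
  have hDu := differentiableAt_fderiv_of_contDiffAt_two hu
  have hDuL := differentiableAt_fderiv_of_contDiffAt_two (hu.comp p L.contDiff.contDiffAt)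
  have chain_rule : (fun q => fderiv 𝕜 (u ∘ L) q w) =ᶠ[𝓝 p] (fun r => fderiv 𝕜 u r (L w)) ∘ L :=
    (L.continuous.continuousAt.eventually
      (eventually_differentiableAt_of_contDiffAt_two hu)).mono
        fun _ hq => fderiv_comp_clm_apply L hq w
  rw [← fderiv_fderiv_apply hDuL, chain_rule.fderiv_eq,
    fderiv_comp_clm_apply L (differentiableAt_fderiv_apply hDu _), fderiv_fderiv_apply hDu]

/-- The Hessian of `u` at `p`, as a bilinear form: the second Fréchet derivative, with no choice of
coordinates. -/
noncomputable def hessian (u : E → 𝕜) (p : E) : LinearMap.BilinForm 𝕜 E :=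
  (fderiv 𝕜 (fderiv 𝕜 u) p).toBilinForm

lemma hessian_comp_clm {u : F → 𝕜} (L : E →L[𝕜] F) {p : E} (hu : ContDiffAt 𝕜 2 u (L p)) :
    hessian (u ∘ L) p = (hessian u (L p)).comp L L :=
  LinearMap.ext₂ (fderiv_fderiv_comp_clm_apply L hu)

end Hessian

lemma det_toMatrix_bilinForm_comp {R M ι : Type*} [CommRing R] [AddCommGroup M] [Module R M]
    [Fintype ι] [DecidableEq ι] (b : Basis ι R M) (B : LinearMap.BilinForm R M) (f : M →ₗ[R] M) :
    (LinearMap.BilinForm.toMatrix b (B.comp f f)).det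
      = LinearMap.det f ^ 2 * (LinearMap.BilinForm.toMatrix b B).det := by
  rw [LinearMap.BilinForm.toMatrix_comp b b, Matrix.det_mul, Matrix.det_mul, Matrix.det_transpose,
    LinearMap.det_toMatrix]
  ring

section PartialDerivatives

variable {u g : ℝ × ℝ → ℝ} {p : ℝ × ℝ}

lemma pdx_eq_fderiv (hu : DifferentiableAt ℝ u p) : pdx u p = fderiv ℝ u p (1, 0) :=
  (hu.hasFDerivAt.comp_hasDerivAt (f := fun x => (x, p.2)) p.1
    ((hasDerivAt_id p.1).prodMk (hasDerivAt_const p.1 p.2))).deriv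

lemma pdy_eq_fderiv (hu : DifferentiableAt ℝ u p) : pdy u p = fderiv ℝ u p (0, 1) :=
  (hu.hasFDerivAt.comp_hasDerivAt (f := fun y => (p.1, y)) p.2
    ((hasDerivAt_const p.2 p.1).prodMk (hasDerivAt_id p.2))).deriv

lemma pdx_congr (h : u =ᶠ[𝓝 p] g) : pdx u p = pdx g p :=
  EventuallyEq.deriv_eq <| (Continuous.prodMk_left p.2).continuousAt.eventually h

lemma pdy_congr (h : u =ᶠ[𝓝 p] g) : pdy u p = pdy g p :=
  EventuallyEq.deriv_eq <| (Continuous.prodMk_right p.1).continuousAt.eventually h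

lemma fst_mul_pdx_add_snd_mul_pdy (hu : DifferentiableAt ℝ u p) :
    p.1 * pdx u p + p.2 * pdy u p = fderiv ℝ u p p := by
  have hp : p = p.1 • ((1 : ℝ), (0 : ℝ)) + p.2 • ((0 : ℝ), (1 : ℝ)) := by ext <;> simp
  conv_rhs => rw [hp, map_add, map_smul, map_smul, ← hp]
  rw [pdx_eq_fderiv hu, pdy_eq_fderiv hu, smul_eq_mul, smul_eq_mul]

lemma pdx_eventuallyEq_fderiv (hu : ContDiffAt ℝ 2 u p) :
    pdx u =ᶠ[𝓝 p] fun q => fderiv ℝ u q (1, 0) :=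
  (eventually_differentiableAt_of_contDiffAt_two hu).mono fun _ => pdx_eq_fderiv

lemma pdy_eventuallyEq_fderiv (hu : ContDiffAt ℝ 2 u p) :
    pdy u =ᶠ[𝓝 p] fun q => fderiv ℝ u q (0, 1) :=
  (eventually_differentiableAt_of_contDiffAt_two hu).mono fun _ => pdy_eq_fderiv

lemma pdx_pdx_eq_hessian (hu : ContDiffAt ℝ 2 u p) :
    pdx (pdx u) p = hessian u p (1, 0) (1, 0) := by
  have hDu := differentiableAt_fderiv_of_contDiffAt_two hu
  rw [pdx_congr (pdx_eventuallyEq_fderiv hu), pdx_eq_fderiv (differentiableAt_fderiv_apply hDu _)]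
  exact fderiv_fderiv_apply hDu _ _

lemma pdy_pdx_eq_hessian (hu : ContDiffAt ℝ 2 u p) :
    pdy (pdx u) p = hessian u p (0, 1) (1, 0) := by
  have hDu := differentiableAt_fderiv_of_contDiffAt_two hu
  rw [pdy_congr (pdx_eventuallyEq_fderiv hu), pdy_eq_fderiv (differentiableAt_fderiv_apply hDu _)]
  exact fderiv_fderiv_apply hDu _ _

lemma pdy_pdy_eq_hessian (hu : ContDiffAt ℝ 2 u p) :
    pdy (pdy u) p = hessian u p (0, 1) (0, 1) := by
  have hDu := differentiableAt_fderiv_of_contDiffAt_two hu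
  rw [pdy_congr (pdy_eventuallyEq_fderiv hu), pdy_eq_fderiv (differentiableAt_fderiv_apply hDu _)]
  exact fderiv_fderiv_apply hDu _ _

lemma det_toMatrix_hessian (hu : ContDiffAt ℝ 2 u p) :
    (LinearMap.BilinForm.toMatrix (Basis.finTwoProd ℝ) (hessian u p)).det
      = pdx (pdx u) p * pdy (pdy u) p - pdy (pdx u) p ^ 2 := by
  have hsymm : hessian u p (1, 0) (0, 1) = hessian u p (0, 1) (1, 0) :=
    (hu.isSymmSndFDerivAt (by simp)).eq _ _
  simp only [Matrix.det_fin_two, LinearMap.BilinForm.toMatrix_apply, Basis.finTwoProd_zero,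
    Basis.finTwoProd_one, hsymm, pdx_pdx_eq_hessian hu, pdy_pdx_eq_hessian hu,
    pdy_pdy_eq_hessian hu, sq]

end PartialDerivatives

section Symmetry

variable {α : ℝ} {u : ℝ × ℝ → ℝ} {p : ℝ × ℝ}

lemma titeicaPDE_iff_det_hessian (hu : ContDiffAt ℝ 2 u p) :
    TiteicaPDE α u p ↔
      (LinearMap.BilinForm.toMatrix (Basis.finTwoProd ℝ) (hessian u p)).det
        = α * (fderiv ℝ u p p - u p) ^ 4 := by
  rw [det_toMatrix_hessian hu, ← fst_mul_pdx_add_snd_mul_pdy (hu.differentiableAt two_ne_zero),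
    TiteicaPDE]

lemma TiteicaPDE.comp_clm (L : ℝ × ℝ →L[ℝ] ℝ × ℝ) (hu : ContDiffAt ℝ 2 u (L p))
    (h : TiteicaPDE α u (L p)) : TiteicaPDE (L.det ^ 2 * α) (u ∘ L) p := by
  rw [titeicaPDE_iff_det_hessian hu] at h
  rw [titeicaPDE_iff_det_hessian (hu.comp p L.contDiff.contDiffAt), hessian_comp_clm L hu,
    det_toMatrix_bilinForm_comp, h, fderiv_comp_clm_apply L (hu.differentiableAt two_ne_zero),
    Function.comp_apply, mul_assoc]

/-- The shear `(x, y) ↦ (x - ε y, y)`, the flow of `X₃ = y ∂/∂x` at time `-ε`. The sign is that of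
the action on functions: the graph of `u ∘ shear ε` is the graph of `u` moved by `exp (ε X₃)`. -/
noncomputable def shear (ε : ℝ) : ℝ × ℝ →L[ℝ] ℝ × ℝ :=
  (ContinuousLinearMap.fst ℝ ℝ ℝ - ε • ContinuousLinearMap.snd ℝ ℝ ℝ).prod
    (ContinuousLinearMap.snd ℝ ℝ ℝ)

lemma det_shear (ε : ℝ) : (shear ε).det = 1 := by
  rw [ContinuousLinearMap.det, ← LinearMap.det_toMatrix (Basis.finTwoProd ℝ), Matrix.det_fin_two]
  simp [LinearMap.toMatrix_apply, shear]

theorem titeica_symmetry_X3_general (L : ℝ × ℝ →L[ℝ] ℝ × ℝ) {D : Set (ℝ × ℝ)} (hD : IsOpen D)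
    (hu : ContDiffOn ℝ 2 u D) (hsol : ∀ p ∈ D, TiteicaPDE α u p) :
    ContDiffOn ℝ 2 (u ∘ L) (L ⁻¹' D) ∧
      ∀ p ∈ L ⁻¹' D, TiteicaPDE (L.det ^ 2 * α) (u ∘ L) p :=
  ⟨hu.comp_continuousLinearMap L,
    fun p hp => (hsol (L p) hp).comp_clm L (hu.contDiffAt (hD.mem_nhds hp))⟩

end Symmetry

/-- The shear group generated by `X₃ = y ∂/∂x` is a symmetry group of the Țițeica PDE:
if `u` is a C² solution on the open set `D`, then for every `ε` the function
`v(x,y) = u(x − ε·y, y)` is C² and solves the PDE wherever `(x − ε·y, y) ∈ D`. -/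
theorem titeica_symmetry_X3 (α ε : ℝ) (D : Set (ℝ × ℝ)) (hD : IsOpen D)
    (u : ℝ × ℝ → ℝ) (hu : ContDiffOn ℝ 2 u D)
    (hsol : ∀ p ∈ D, TiteicaPDE α u p) :
    ContDiffOn ℝ 2 (fun p : ℝ × ℝ => u (p.1 - ε * p.2, p.2))
      {p : ℝ × ℝ | (p.1 - ε * p.2, p.2) ∈ D} ∧
    ∀ p : ℝ × ℝ, (p.1 - ε * p.2, p.2) ∈ D →
      TiteicaPDE α (fun q : ℝ × ℝ => u (q.1 - ε * q.2, q.2)) p := by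
  have h := titeica_symmetry_X3_general (shear ε) hD hu hsol
  rwa [det_shear, one_pow, one_mul] at h
end

section
/- Let α ∈ ℝ, let D ⊆ ℝ² be open, and let u : ℝ² → ℝ be C² on D and satisfy the Țițeica PDE with parameter α at every point of D. Then for every ε ∈ ℝ the function v(x,y) = u(x,y) + ε·y is C² and satisfies the Țițeica PDE with the same parameter α at every point of D. -/
open Filter Topology

/-! The shear `u ↦ u + ε y` adds `0` to `u_x` and `ε` to `u_y`. Hence it changes no second
derivative, and in `x u_x + y u_y − u` the new terms `y ε` and `−ε y` cancel. -/

lemma pdx_add_comp_snd (u : ℝ × ℝ → ℝ) (g : ℝ → ℝ) :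
    pdx (fun q => u q + g q.2) = pdx u :=
  funext fun p => deriv_add_const (f := fun x => u (x, p.2)) (g p.2)

lemma pdy_add_comp_snd {u : ℝ × ℝ → ℝ} {g : ℝ → ℝ} {p : ℝ × ℝ}
    (hu : DifferentiableAt ℝ (fun y => u (p.1, y)) p.2) (hg : DifferentiableAt ℝ g p.2) :
    pdy (fun q => u q + g q.2) p = pdy u p + deriv g p.2 :=
  deriv_fun_add hu hg

lemma pdy_add_const_mul_snd {u : ℝ × ℝ → ℝ} (ε : ℝ) {p : ℝ × ℝ}
    (hu : DifferentiableAt ℝ (fun y => u (p.1, y)) p.2) :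
    pdy (fun q => u q + ε * q.2) p = pdy u p + ε := by
  simpa using pdy_add_comp_snd (g := fun y => ε * y) hu (by fun_prop)

lemma pdy_pdy_add_const_mul_snd {u : ℝ × ℝ → ℝ} (ε : ℝ) {p : ℝ × ℝ}
    (hu : ∀ᶠ y in 𝓝 p.2, DifferentiableAt ℝ (fun t => u (p.1, t)) y) :
    pdy (pdy fun q => u q + ε * q.2) p = pdy (pdy u) p :=
  calc pdy (pdy fun q => u q + ε * q.2) p
    _ = deriv (fun y => pdy u (p.1, y) + ε) p.2 :=
      EventuallyEq.deriv_eq <| hu.mono fun y hy => pdy_add_const_mul_snd (p := (p.1, y)) ε hy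
    _ = pdy (pdy u) p := deriv_add_const ε

lemma eventually_differentiableAt_snd {𝕜 E F G : Type*} [NontriviallyNormedField 𝕜]
    [NormedAddCommGroup E] [NormedSpace 𝕜 E] [NormedAddCommGroup F] [NormedSpace 𝕜 F]
    [NormedAddCommGroup G] [NormedSpace 𝕜 G] {f : E × F → G} {p : E × F}
    (hf : ∀ᶠ q in 𝓝 p, DifferentiableAt 𝕜 f q) :
    ∀ᶠ y in 𝓝 p.2, DifferentiableAt 𝕜 (fun t => f (p.1, t)) y := by
  have hslice : Tendsto (fun y => (p.1, y)) (𝓝 p.2) (𝓝 p) :=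
    (Continuous.prodMk_right p.1).tendsto p.2
  exact (hslice.eventually hf).mono fun y hy => hy.fun_comp' y (by fun_prop)

theorem titeica_symmetry_X8_general (α ε : ℝ) {u : ℝ × ℝ → ℝ} {p : ℝ × ℝ}
    (hu : ∀ᶠ y in 𝓝 p.2, DifferentiableAt ℝ (fun t => u (p.1, t)) y) :
    TiteicaPDE α (fun q => u q + ε * q.2) p ↔ TiteicaPDE α u p := by
  have hx : pdx (fun q => u q + ε * q.2) = pdx u := pdx_add_comp_snd u (ε * ·)
  have hy : pdy (fun q => u q + ε * q.2) p = pdy u p + ε :=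
    pdy_add_const_mul_snd ε hu.self_of_nhds
  have hyy : pdy (pdy fun q => u q + ε * q.2) p = pdy (pdy u) p :=
    pdy_pdy_add_const_mul_snd ε hu
  have hcancel : p.1 * pdx u p + p.2 * (pdy u p + ε) - (u p + ε * p.2)
      = p.1 * pdx u p + p.2 * pdy u p - u p := by ring
  rw [TiteicaPDE, TiteicaPDE, hx, hy, hyy, hcancel]

/-- The group generated by `X₈ = y ∂/∂u` is a symmetry group of the Țițeica PDE:
if `u` is a C² solution on the open set `D`, then for every `ε` the function
`v(x,y) = u(x,y) + ε·y` is C² on `D` and solves the PDE at every point of `D`. -/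
theorem titeica_symmetry_X8 (α ε : ℝ) (D : Set (ℝ × ℝ)) (hD : IsOpen D)
    (u : ℝ × ℝ → ℝ) (hu : ContDiffOn ℝ 2 u D)
    (hsol : ∀ p ∈ D, TiteicaPDE α u p) :
    ContDiffOn ℝ 2 (fun p : ℝ × ℝ => u p + ε * p.2) D ∧
    ∀ p ∈ D, TiteicaPDE α (fun q : ℝ × ℝ => u q + ε * q.2) p := by
  refine ⟨hu.add (by fun_prop), fun p hp => (titeica_symmetry_X8_general α ε ?_).2 (hsol p hp)⟩
  exact eventually_differentiableAt_snd <|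
    (hu.differentiableOn two_ne_zero).eventually_differentiableAt (hD.mem_nhds hp)
end

section
/- Let ζ, η, φ : ℝ³ → ℝ be C² functions of the variables (x,y,u) satisfying the system of partial differential equations: ζ_xy = 0, ζ_yy = 0, ζ_uu = 0, ζ_uy = 0; η_xx = 0, η_yy = 0, η_uu = 0, η_ux = 0; φ_xx = 0, φ_xy = 0, φ_yy = 0, φ_uy = 0; φ_uu = 2η_uy, φ_ux = η_xy, η_uy = ζ_ux, 2φ_xu = ζ_xx; together with 2φ − 2x·φ_x − 2y·φ_y − u·(φ_u − ζ_x − η_y) = 0, 2ζ − 2y·ζ_y − x·(ζ_x − η_y − φ_u) − 2u·ζ_u = 0, and 2η − 2x·η_x + y·(φ_u + ζ_x − η_y) − 2u·η_u = 0, all identically on ℝ³. Then there exist real constants C₁,…,C₈ such that ζ(x,y,u) = C₁·x + C₃·y + C₄·u, η(x,y,u) = C₅·x + C₂·y + C₆·u, and φ(x,y,u) = C₇·x + C₈·y − (C₁ + C₂)·u for all (x,y,u) ∈ ℝ³. -/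
/-- Partial derivative with respect to `x`, for a function of `(x, y, u) ∈ ℝ³`. -/
noncomputable def dX (F : ℝ × ℝ × ℝ → ℝ) (p : ℝ × ℝ × ℝ) : ℝ :=
  deriv (fun x => F (x, p.2.1, p.2.2)) p.1

/-- Partial derivative with respect to `y`, for a function of `(x, y, u) ∈ ℝ³`. -/
noncomputable def dY (F : ℝ × ℝ × ℝ → ℝ) (p : ℝ × ℝ × ℝ) : ℝ :=
  deriv (fun y => F (p.1, y, p.2.2)) p.2.1

/-- Partial derivative with respect to `u`, for a function of `(x, y, u) ∈ ℝ³`. -/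
noncomputable def dU (F : ℝ × ℝ × ℝ → ℝ) (p : ℝ × ℝ × ℝ) : ℝ :=
  deriv (fun u => F (p.1, p.2.1, u)) p.2.2

/-!
Differentiating the equation `2φ − 2x φ_x − 2y φ_y − u (φ_u − ζ_x − η_y) = 0` in `x` and inserting
the second-order equations leaves `u η_xy = 0`, so `η_xy` vanishes off the plane `u = 0` and hence,
by continuity, everywhere. Differentiating it in `u` then shows that the vector field `(ζ, η, φ)`
is divergence-free, and a further `u`-derivative of the divergence gives `4 η_uy = 0`. Now all
second partial derivatives of `ζ`, `η`, `φ` vanish, so the three functions are affine.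
-/

section FDeriv

variable {𝕜 E F : Type*} [RCLike 𝕜] [NormedAddCommGroup E] [NormedSpace 𝕜 E]
  [NormedAddCommGroup F] [NormedSpace 𝕜 F] {f : E → F}

theorem fderiv_fderiv_apply_comm {x : E} (hf : ContDiffAt 𝕜 2 f x) (v w : E) :
    fderiv 𝕜 (fun y => fderiv 𝕜 f y v) x w = fderiv 𝕜 (fun y => fderiv 𝕜 f y w) x v := by
  have hf' : DifferentiableAt 𝕜 (fderiv 𝕜 f) x :=
    (hf.fderiv_right (m := 1) (by norm_num)).differentiableAt one_ne_zero
  simpa [fderiv_clm_apply hf' (differentiableAt_const _)] using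
    hf.isSymmSndFDerivAt (by simp) w v

theorem eq_add_of_fderiv_eq_const (hf : Differentiable 𝕜 f) {L : E →L[𝕜] F}
    (hL : ∀ x, fderiv 𝕜 f x = L) (x : E) : f x = f 0 + L x :=
  congrFun (eq_of_fderiv_eq (g := fun x => f 0 + L x) hf (by fun_prop) (by simp [hL]) 0
    (by simp)) x

end FDeriv

theorem eq_zero_of_forall_mul_eq_zero {𝕜 : Type*} [NontriviallyNormedField 𝕜] {f : 𝕜 → 𝕜}
    (hf : Continuous f) (h : ∀ t, t * f t = 0) : f = 0 :=
  hf.ext_on (dense_compl_singleton 0) continuous_zero fun t ht =>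
    (mul_eq_zero.mp (h t)).resolve_left ht

section PartialDerivatives

variable {F G : ℝ × ℝ × ℝ → ℝ} {p : ℝ × ℝ × ℝ}

theorem hasDerivAt_dX (hF : DifferentiableAt ℝ F p) :
    HasDerivAt (fun x => F (x, p.2.1, p.2.2)) (dX F p) p.1 :=
  (hF.comp p.1 (by fun_prop : DifferentiableAt ℝ (fun x => (x, p.2.1, p.2.2)) p.1)).hasDerivAt

theorem hasDerivAt_dU (hF : DifferentiableAt ℝ F p) :
    HasDerivAt (fun u => F (p.1, p.2.1, u)) (dU F p) p.2.2 :=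
  (hF.comp p.2.2 (by fun_prop : DifferentiableAt ℝ (fun u => (p.1, p.2.1, u)) p.2.2)).hasDerivAt

theorem dX_sub (hF : DifferentiableAt ℝ F p) (hG : DifferentiableAt ℝ G p) :
    dX (F - G) p = dX F p - dX G p :=
  ((hasDerivAt_dX hF).sub (hasDerivAt_dX hG)).deriv

theorem dU_add (hF : DifferentiableAt ℝ F p) (hG : DifferentiableAt ℝ G p) :
    dU (F + G) p = dU F p + dU G p :=
  ((hasDerivAt_dU hF).add (hasDerivAt_dU hG)).deriv

theorem dU_sub (hF : DifferentiableAt ℝ F p) (hG : DifferentiableAt ℝ G p) :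
    dU (F - G) p = dU F p - dU G p :=
  ((hasDerivAt_dU hF).sub (hasDerivAt_dU hG)).deriv

theorem dX_eq_fderiv (hF : DifferentiableAt ℝ F p) : dX F p = fderiv ℝ F p (1, 0, 0) :=
  (hF.hasFDerivAt.comp_hasDerivAt p.1
    ((hasDerivAt_id p.1).prodMk (hasDerivAt_const p.1 (p.2.1, p.2.2)))).deriv

theorem dY_eq_fderiv (hF : DifferentiableAt ℝ F p) : dY F p = fderiv ℝ F p (0, 1, 0) :=
  (hF.hasFDerivAt.comp_hasDerivAt p.2.1 ((hasDerivAt_const p.2.1 p.1).prodMk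
    ((hasDerivAt_id p.2.1).prodMk (hasDerivAt_const p.2.1 p.2.2)))).deriv

theorem dU_eq_fderiv (hF : DifferentiableAt ℝ F p) : dU F p = fderiv ℝ F p (0, 0, 1) :=
  (hF.hasFDerivAt.comp_hasDerivAt p.2.2 ((hasDerivAt_const p.2.2 p.1).prodMk
    ((hasDerivAt_const p.2.2 p.2.1).prodMk (hasDerivAt_id p.2.2)))).deriv

theorem fderiv_apply_eq_partials (hF : DifferentiableAt ℝ F p) (x y u : ℝ) :
    fderiv ℝ F p (x, y, u) = dX F p * x + dY F p * y + dU F p * u := by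
  have basis_expansion :
      ((x, y, u) : ℝ × ℝ × ℝ) = x • (1, 0, 0) + y • (0, 1, 0) + u • (0, 0, 1) := by simp
  rw [basis_expansion, map_add, map_add, map_smul, map_smul, map_smul, ← dX_eq_fderiv hF,
    ← dY_eq_fderiv hF, ← dU_eq_fderiv hF]
  simp only [smul_eq_mul, mul_comm]

theorem eq_add_of_partials_eq_const (hF : Differentiable ℝ F) {a b c : ℝ}
    (hX : ∀ p, dX F p = a) (hY : ∀ p, dY F p = b) (hU : ∀ p, dU F p = c) (x y u : ℝ) :
    F (x, y, u) = F 0 + a * x + b * y + c * u := by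
  have fderiv_const : ∀ p, fderiv ℝ F p = fderiv ℝ F 0 := fun p =>
    ContinuousLinearMap.ext fun v => by
      simp only [fderiv_apply_eq_partials (hF _) v.1 v.2.1 v.2.2, hX, hY, hU]
  rw [eq_add_of_fderiv_eq_const hF fderiv_const, fderiv_apply_eq_partials (hF 0), hX, hY, hU]
  ring

section ContDiff

variable {n m : WithTop ℕ∞}

theorem contDiff_dX (hF : ContDiff ℝ n F) (hmn : m + 1 ≤ n) : ContDiff ℝ m (dX F) := by
  have hF' : Differentiable ℝ F := (hF.of_le (le_add_self.trans hmn)).differentiable one_ne_zero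
  have hX : dX F = fun p => fderiv ℝ F p (1, 0, 0) := funext fun p => dX_eq_fderiv (hF' p)
  exact hX ▸ (hF.fderiv_right hmn).clm_apply contDiff_const

theorem contDiff_dY (hF : ContDiff ℝ n F) (hmn : m + 1 ≤ n) : ContDiff ℝ m (dY F) := by
  have hF' : Differentiable ℝ F := (hF.of_le (le_add_self.trans hmn)).differentiable one_ne_zero
  have hY : dY F = fun p => fderiv ℝ F p (0, 1, 0) := funext fun p => dY_eq_fderiv (hF' p)
  exact hY ▸ (hF.fderiv_right hmn).clm_apply contDiff_const

theorem contDiff_dU (hF : ContDiff ℝ n F) (hmn : m + 1 ≤ n) : ContDiff ℝ m (dU F) := by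
  have hF' : Differentiable ℝ F := (hF.of_le (le_add_self.trans hmn)).differentiable one_ne_zero
  have hU : dU F = fun p => fderiv ℝ F p (0, 0, 1) := funext fun p => dU_eq_fderiv (hF' p)
  exact hU ▸ (hF.fderiv_right hmn).clm_apply contDiff_const

end ContDiff

theorem differentiable_dX (hF : ContDiff ℝ 2 F) : Differentiable ℝ (dX F) :=
  (contDiff_dX hF one_add_one_eq_two.le).differentiable one_ne_zero

theorem differentiable_dY (hF : ContDiff ℝ 2 F) : Differentiable ℝ (dY F) :=
  (contDiff_dY hF one_add_one_eq_two.le).differentiable one_ne_zero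

theorem differentiable_dU (hF : ContDiff ℝ 2 F) : Differentiable ℝ (dU F) :=
  (contDiff_dU hF one_add_one_eq_two.le).differentiable one_ne_zero

theorem dX_dY_comm (hF : ContDiff ℝ 2 F) (p : ℝ × ℝ × ℝ) : dX (dY F) p = dY (dX F) p := by
  have hF' := hF.differentiable two_ne_zero
  have hX : dX F = fun q => fderiv ℝ F q (1, 0, 0) := funext fun q => dX_eq_fderiv (hF' q)
  have hY : dY F = fun q => fderiv ℝ F q (0, 1, 0) := funext fun q => dY_eq_fderiv (hF' q)
  rw [dX_eq_fderiv (differentiable_dY hF p), dY_eq_fderiv (differentiable_dX hF p), hX, hY]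
  exact fderiv_fderiv_apply_comm hF.contDiffAt _ _

theorem dX_dU_comm (hF : ContDiff ℝ 2 F) (p : ℝ × ℝ × ℝ) : dX (dU F) p = dU (dX F) p := by
  have hF' := hF.differentiable two_ne_zero
  have hX : dX F = fun q => fderiv ℝ F q (1, 0, 0) := funext fun q => dX_eq_fderiv (hF' q)
  have hU : dU F = fun q => fderiv ℝ F q (0, 0, 1) := funext fun q => dU_eq_fderiv (hF' q)
  rw [dX_eq_fderiv (differentiable_dU hF p), dU_eq_fderiv (differentiable_dX hF p), hX, hU]
  exact fderiv_fderiv_apply_comm hF.contDiffAt _ _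

theorem dY_dU_comm (hF : ContDiff ℝ 2 F) (p : ℝ × ℝ × ℝ) : dY (dU F) p = dU (dY F) p := by
  have hF' := hF.differentiable two_ne_zero
  have hY : dY F = fun q => fderiv ℝ F q (0, 1, 0) := funext fun q => dY_eq_fderiv (hF' q)
  have hU : dU F = fun q => fderiv ℝ F q (0, 0, 1) := funext fun q => dU_eq_fderiv (hF' q)
  rw [dY_eq_fderiv (differentiable_dU hF p), dU_eq_fderiv (differentiable_dY hF p), hY, hU]
  exact fderiv_fderiv_apply_comm hF.contDiffAt _ _

theorem eq_add_of_second_partials_eq_zero (hF : ContDiff ℝ 2 F)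
    (hXX : ∀ p, dX (dX F) p = 0) (hXY : ∀ p, dX (dY F) p = 0) (hYY : ∀ p, dY (dY F) p = 0)
    (hUX : ∀ p, dU (dX F) p = 0) (hUY : ∀ p, dU (dY F) p = 0) (hUU : ∀ p, dU (dU F) p = 0)
    (x y u : ℝ) :
    F (x, y, u) = F 0 + dX F 0 * x + dY F 0 * y + dU F 0 * u := by
  have dX_const : ∀ p, dX F p = dX F 0 := fun p => by
    simpa using eq_add_of_partials_eq_const (differentiable_dX hF) hXX
      (fun q => (dX_dY_comm hF q).symm.trans (hXY q)) hUX p.1 p.2.1 p.2.2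
  have dY_const : ∀ p, dY F p = dY F 0 := fun p => by
    simpa using eq_add_of_partials_eq_const (differentiable_dY hF) hXY hYY hUY p.1 p.2.1 p.2.2
  have dU_const : ∀ p, dU F p = dU F 0 := fun p => by
    simpa using eq_add_of_partials_eq_const (differentiable_dU hF)
      (fun q => (dX_dU_comm hF q).trans (hUX q)) (fun q => (dY_dU_comm hF q).trans (hUY q)) hUU
      p.1 p.2.1 p.2.2
  exact eq_add_of_partials_eq_const (hF.differentiable two_ne_zero) dX_const dY_const dU_const x y u

end PartialDerivatives

section DeterminingSystem

/-- The left-hand side `2φ − 2x φ_x − 2y φ_y − u g` of the first Euler-type equation of the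
determining system, in which `g` is `φ_u − ζ_x − η_y`. -/
noncomputable def eulerResidual (φ g : ℝ × ℝ × ℝ → ℝ) (p : ℝ × ℝ × ℝ) : ℝ :=
  2 * φ p - 2 * p.1 * dX φ p - 2 * p.2.1 * dY φ p - p.2.2 * g p

variable {ζ η φ g : ℝ × ℝ × ℝ → ℝ}

theorem dX_eulerResidual (hφ : ContDiff ℝ 2 φ) (hg : Differentiable ℝ g) (p : ℝ × ℝ × ℝ) :
    dX (eulerResidual φ g) p =
      -(2 * p.1 * dX (dX φ) p + 2 * p.2.1 * dX (dY φ) p + p.2.2 * dX g p) := by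
  have hderiv :=
    ((((hasDerivAt_dX (hφ.differentiable two_ne_zero p)).const_mul 2).sub
      (((hasDerivAt_id p.1).const_mul 2).mul (hasDerivAt_dX (differentiable_dX hφ p)))).sub
      ((hasDerivAt_dX (differentiable_dY hφ p)).const_mul (2 * p.2.1))).sub
      ((hasDerivAt_dX (hg p)).const_mul p.2.2)
  exact hderiv.deriv.trans (by simp only [id_eq]; ring)

theorem dU_eulerResidual (hφ : ContDiff ℝ 2 φ) (hg : Differentiable ℝ g) (p : ℝ × ℝ × ℝ) :
    dU (eulerResidual φ g) p =
      2 * dU φ p - 2 * p.1 * dU (dX φ) p - 2 * p.2.1 * dU (dY φ) p - g p - p.2.2 * dU g p := by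
  have hderiv :=
    ((((hasDerivAt_dU (hφ.differentiable two_ne_zero p)).const_mul 2).sub
      ((hasDerivAt_dU (differentiable_dX hφ p)).const_mul (2 * p.1))).sub
      ((hasDerivAt_dU (differentiable_dY hφ p)).const_mul (2 * p.2.1))).sub
      ((hasDerivAt_id p.2.2).mul (hasDerivAt_dU (hg p)))
  exact hderiv.deriv.trans (by simp only [id_eq]; ring)

theorem dX_dY_eq_zero_of_eulerResidual_eq_zero
    (hζ : ContDiff ℝ 2 ζ) (hη : ContDiff ℝ 2 η) (hφ : ContDiff ℝ 2 φ)
    (hφxx : ∀ p, dX (dX φ) p = 0) (hφxy : ∀ p, dX (dY φ) p = 0)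
    (hφux : ∀ p, dU (dX φ) p = dX (dY η) p) (hφxu : ∀ p, 2 * dX (dU φ) p = dX (dX ζ) p)
    (hEuler : ∀ p, eulerResidual φ (dU φ - dX ζ - dY η) p = 0) (p : ℝ × ℝ × ℝ) :
    dX (dY η) p = 0 := by
  have hφu := differentiable_dU hφ
  have hζx := differentiable_dX hζ
  have hηy := differentiable_dY hη
  have mul_eq_zero_on_line : ∀ u, u * dX (dY η) (p.1, p.2.1, u) = 0 := fun u => by
    let q : ℝ × ℝ × ℝ := (p.1, p.2.1, u)
    have hEuler_x : dX (eulerResidual φ (dU φ - dX ζ - dY η)) q = 0 := by simp [dX, hEuler]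
    rw [dX_eulerResidual hφ ((hφu.sub hζx).sub hηy), dX_sub ((hφu q).sub (hζx q)) (hηy q),
      dX_sub (hφu q) (hζx q), hφxx, hφxy, ← hφxu, dX_dU_comm hφ, hφux] at hEuler_x
    linear_combination hEuler_x / 2
  have hcont : Continuous fun u => dX (dY η) (p.1, p.2.1, u) :=
    (contDiff_dX (m := 0) (contDiff_dY hη one_add_one_eq_two.le) (zero_add 1).le).continuous.comp
      (by fun_prop)
  exact congrFun (eq_zero_of_forall_mul_eq_zero hcont mul_eq_zero_on_line) p.2.2

theorem divergence_eq_zero_of_eulerResidual_eq_zero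
    (hζ : ContDiff ℝ 2 ζ) (hη : ContDiff ℝ 2 η) (hφ : ContDiff ℝ 2 φ)
    (hφux : ∀ p, dU (dX φ) p = 0) (hφuy : ∀ p, dU (dY φ) p = 0)
    (hφuu : ∀ p, dU (dU φ) p = 2 * dU (dY η) p) (hηuy : ∀ p, dU (dY η) p = dU (dX ζ) p)
    (hEuler : ∀ p, eulerResidual φ (dU φ - dX ζ - dY η) p = 0) (p : ℝ × ℝ × ℝ) :
    dX ζ p + dY η p + dU φ p = 0 := by
  have hφu := differentiable_dU hφ
  have hζx := differentiable_dX hζ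
  have hηy := differentiable_dY hη
  have hEuler_u : dU (eulerResidual φ (dU φ - dX ζ - dY η)) p = 0 := by simp [dU, hEuler]
  rw [dU_eulerResidual hφ ((hφu.sub hζx).sub hηy), dU_sub ((hφu p).sub (hζx p)) (hηy p),
    dU_sub (hφu p) (hζx p), hφux, hφuy, hφuu, ← hηuy, Pi.sub_apply, Pi.sub_apply] at hEuler_u
  linear_combination hEuler_u

theorem dU_dY_eq_zero_of_divergence_eq_zero
    (hζ : ContDiff ℝ 2 ζ) (hη : ContDiff ℝ 2 η) (hφ : ContDiff ℝ 2 φ)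
    (hφuu : ∀ p, dU (dU φ) p = 2 * dU (dY η) p) (hηuy : ∀ p, dU (dY η) p = dU (dX ζ) p)
    (hdiv : ∀ p, dX ζ p + dY η p + dU φ p = 0) (p : ℝ × ℝ × ℝ) : dU (dY η) p = 0 := by
  have hφu := differentiable_dU hφ
  have hζx := differentiable_dX hζ
  have hηy := differentiable_dY hη
  have hdiv_u : dU (dX ζ + dY η + dU φ) p = 0 := by
    rw [show dX ζ + dY η + dU φ = 0 from funext hdiv]
    simp [dU]
  rw [dU_add ((hζx p).add (hηy p)) (hφu p), dU_add (hζx p) (hηy p), hφuu, ← hηuy] at hdiv_u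
  linear_combination hdiv_u / 4

end DeterminingSystem

theorem titeica_determining_system_general
    (ζ η φ : ℝ × ℝ × ℝ → ℝ)
    (hζ : ContDiff ℝ 2 ζ) (hη : ContDiff ℝ 2 η) (hφ : ContDiff ℝ 2 φ)
    (hζxy : ∀ p, dX (dY ζ) p = 0) (hζyy : ∀ p, dY (dY ζ) p = 0)
    (hζuu : ∀ p, dU (dU ζ) p = 0) (hζuy : ∀ p, dU (dY ζ) p = 0)
    (hηxx : ∀ p, dX (dX η) p = 0) (hηyy : ∀ p, dY (dY η) p = 0)
    (hηuu : ∀ p, dU (dU η) p = 0) (hηux : ∀ p, dU (dX η) p = 0)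
    (hφxx : ∀ p, dX (dX φ) p = 0) (hφxy : ∀ p, dX (dY φ) p = 0)
    (hφyy : ∀ p, dY (dY φ) p = 0) (hφuy : ∀ p, dU (dY φ) p = 0)
    (hφuu : ∀ p, dU (dU φ) p = 2 * dU (dY η) p)
    (hφux : ∀ p, dU (dX φ) p = dX (dY η) p)
    (hηuy : ∀ p, dU (dY η) p = dU (dX ζ) p)
    (hφxu : ∀ p, 2 * dX (dU φ) p = dX (dX ζ) p)
    (hEuler : ∀ p : ℝ × ℝ × ℝ,
      2 * φ p - 2 * p.1 * dX φ p - 2 * p.2.1 * dY φ p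
        - p.2.2 * (dU φ p - dX ζ p - dY η p) = 0) :
    ∃ C₁ C₂ C₃ C₄ C₅ C₆ C₇ C₈ : ℝ, ∀ x y u : ℝ,
      ζ (x, y, u) = ζ 0 + C₁ * x + C₃ * y + C₄ * u ∧
      η (x, y, u) = η 0 + C₅ * x + C₂ * y + C₆ * u ∧
      φ (x, y, u) = C₇ * x + C₈ * y - (C₁ + C₂) * u := by
  have hηxy_zero := dX_dY_eq_zero_of_eulerResidual_eq_zero hζ hη hφ hφxx hφxy hφux hφxu hEuler
  have hφux_zero : ∀ p, dU (dX φ) p = 0 := fun p => (hφux p).trans (hηxy_zero p)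
  have hdiv := divergence_eq_zero_of_eulerResidual_eq_zero hζ hη hφ hφux_zero hφuy hφuu hηuy hEuler
  have hηuy_zero := dU_dY_eq_zero_of_divergence_eq_zero hζ hη hφ hφuu hηuy hdiv
  have hζux_zero : ∀ p, dU (dX ζ) p = 0 := fun p => (hηuy p).symm.trans (hηuy_zero p)
  have hφuu_zero : ∀ p, dU (dU φ) p = 0 := fun p => by rw [hφuu, hηuy_zero, mul_zero]
  have hζxx_zero : ∀ p, dX (dX ζ) p = 0 := fun p => by
    rw [← hφxu, dX_dU_comm hφ, hφux_zero, mul_zero]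
  have hφ_origin : φ 0 = 0 := by simpa using hEuler 0
  refine ⟨dX ζ 0, dY η 0, dY ζ 0, dU ζ 0, dX η 0, dU η 0, dX φ 0, dY φ 0, fun x y u =>
    ⟨eq_add_of_second_partials_eq_zero hζ hζxx_zero hζxy hζyy hζux_zero hζuy hζuu x y u,
      eq_add_of_second_partials_eq_zero hη hηxx hηxy_zero hηyy hηux hηuy_zero hηuu x y u, ?_⟩⟩
  rw [eq_add_of_second_partials_eq_zero hφ hφxx hφxy hφyy hφux_zero hφuy hφuu_zero x y u]
  linear_combination hφ_origin + u * hdiv 0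

/-- The solution of the determining system for the infinitesimal symmetries of the
Țițeica surfaces PDE: any C² solution `(ζ, η, φ)` of the system is of the form
`ζ = C₁x + C₃y + C₄u`, `η = C₅x + C₂y + C₆u`, `φ = C₇x + C₈y − (C₁+C₂)u`. -/
theorem titeica_determining_system
    (ζ η φ : ℝ × ℝ × ℝ → ℝ)
    (hζ : ContDiff ℝ 2 ζ) (hη : ContDiff ℝ 2 η) (hφ : ContDiff ℝ 2 φ)
    -- ζ_xy = 0, ζ_yy = 0, ζ_uu = 0, ζ_uy = 0
    (h1 : ∀ p, dX (dY ζ) p = 0) (h2 : ∀ p, dY (dY ζ) p = 0)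
    (h3 : ∀ p, dU (dU ζ) p = 0) (h4 : ∀ p, dU (dY ζ) p = 0)
    -- η_xx = 0, η_yy = 0, η_uu = 0, η_ux = 0
    (h5 : ∀ p, dX (dX η) p = 0) (h6 : ∀ p, dY (dY η) p = 0)
    (h7 : ∀ p, dU (dU η) p = 0) (h8 : ∀ p, dU (dX η) p = 0)
    -- φ_xx = 0, φ_xy = 0, φ_yy = 0, φ_uy = 0
    (h9 : ∀ p, dX (dX φ) p = 0) (h10 : ∀ p, dX (dY φ) p = 0)
    (h11 : ∀ p, dY (dY φ) p = 0) (h12 : ∀ p, dU (dY φ) p = 0)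
    -- φ_uu = 2 η_uy, φ_ux = η_xy, η_uy = ζ_ux, 2 φ_xu = ζ_xx
    (h13 : ∀ p, dU (dU φ) p = 2 * dU (dY η) p)
    (h14 : ∀ p, dU (dX φ) p = dX (dY η) p)
    (h15 : ∀ p, dU (dY η) p = dU (dX ζ) p)
    (h16 : ∀ p, 2 * dX (dU φ) p = dX (dX ζ) p)
    -- 2φ − 2x φ_x − 2y φ_y − u (φ_u − ζ_x − η_y) = 0
    (h17 : ∀ p : ℝ × ℝ × ℝ,
      2 * φ p - 2 * p.1 * dX φ p - 2 * p.2.1 * dY φ p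
        - p.2.2 * (dU φ p - dX ζ p - dY η p) = 0)
    -- 2ζ − 2y ζ_y − x (ζ_x − η_y − φ_u) − 2u ζ_u = 0
    (h18 : ∀ p : ℝ × ℝ × ℝ,
      2 * ζ p - 2 * p.2.1 * dY ζ p - p.1 * (dX ζ p - dY η p - dU φ p)
        - 2 * p.2.2 * dU ζ p = 0)
    -- 2η − 2x η_x + y (φ_u + ζ_x − η_y) − 2u η_u = 0
    (h19 : ∀ p : ℝ × ℝ × ℝ,
      2 * η p - 2 * p.1 * dX η p + p.2.1 * (dU φ p + dX ζ p - dY η p)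
        - 2 * p.2.2 * dU η p = 0) :
    ∃ C₁ C₂ C₃ C₄ C₅ C₆ C₇ C₈ : ℝ, ∀ x y u : ℝ,
      ζ (x, y, u) = C₁ * x + C₃ * y + C₄ * u ∧
      η (x, y, u) = C₅ * x + C₂ * y + C₆ * u ∧
      φ (x, y, u) = C₇ * x + C₈ * y - (C₁ + C₂) * u := by
  have hζ_origin : ζ 0 = 0 := by simpa using h18 0
  have hη_origin : η 0 = 0 := by simpa using h19 0
  simpa only [hζ_origin, hη_origin, zero_add] using titeica_determining_system_general ζ η φ
    hζ hη hφ h1 h2 h3 h4 h5 h6 h7 h8 h9 h10 h11 h12 h13 h14 h15 h16 h17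
end

section
/- Let α ∈ ℝ and define L : ℝ⁸ → ℝ on the open set where x·p + y·q − u ≠ 0 by L(x,y,u,p,q,r,s,t) = u·(s² − r·t)/(x·p + y·q − u)⁴ − α·u. Then at every point of this set: (i) x·L_x − u·L_u − 2p·L_p − q·L_q − 3r·L_r − 2s·L_s − t·L_t + L = 0, and (ii) y·L_y − u·L_u − p·L_p − 2q·L_q − r·L_r − 2s·L_s − 3t·L_t + L = 0, where subscripts denote partial derivatives of L with respect to the indicated variables. -/
/-- Partial derivative of a function on the jet space `ℝ⁸` (coordinates
`(x, y, u, p, q, r, s, t)` indexed by `0, …, 7`) with respect to the `i`-th variable. -/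
noncomputable def jd (i : Fin 8) (L : (Fin 8 → ℝ) → ℝ) (v : Fin 8 → ℝ) : ℝ :=
  deriv (fun a => L (Function.update v i a)) (v i)

/-- The Țițeica Lagrangian `L(x,y,u,p,q,r,s,t) = u·(s² − r·t)/(x·p + y·q − u)⁴ − α·u`,
with jet coordinates `x = v 0`, `y = v 1`, `u = v 2`, `p = v 3`, `q = v 4`,
`r = v 5`, `s = v 6`, `t = v 7`. -/
noncomputable def titeicaLagrangian (α : ℝ) (v : Fin 8 → ℝ) : ℝ :=
  v 2 * ((v 6) ^ 2 - v 5 * v 7) / (v 0 * v 3 + v 1 * v 4 - v 2) ^ 4 - α * v 2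

/-! The second prolongation of `Y = a x ∂/∂x + b y ∂/∂y - (a + b) u ∂/∂u` generates a group that
scales each jet coordinate by a power of the group parameter, and the Lagrangian is homogeneous of
degree `-(a + b)` under it. Since `Div ξ = a + b`, the condition `pr²Y(L) + L·Div ξ = 0` is Euler's
identity, obtained by differentiating the homogeneity relation at the identity of the group. -/

/-- `f` is homogeneous of degree `d` when the coordinate `i` is given the weight `w i`. The weights
may be negative, so only scalings by `c ≠ 0` are considered. -/
def IsWeightedHomogeneous {ι 𝕜 F : Type*} [Field 𝕜] [AddCommGroup F] [Module 𝕜 F]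
    (w : ι → ℤ) (d : ℤ) (f : (ι → 𝕜) → F) : Prop :=
  ∀ c : 𝕜, c ≠ 0 → ∀ v : ι → 𝕜, f (fun i => c ^ w i * v i) = c ^ d • f v

section Euler

variable {ι 𝕜 F : Type*} [NontriviallyNormedField 𝕜]

theorem hasDerivAt_pi_zpow_mul_one (w : ι → ℤ) (v : ι → 𝕜) :
    HasDerivAt (fun (c : 𝕜) i => c ^ w i * v i) (fun i => w i * v i) 1 :=
  hasDerivAt_pi.2 fun i => by
    simpa using (hasDerivAt_zpow (w i) (1 : 𝕜) (Or.inl one_ne_zero)).mul_const (v i)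

variable [NormedAddCommGroup F] [NormedSpace 𝕜 F]

theorem IsWeightedHomogeneous.fderiv_apply_weighted [Finite ι] {w : ι → ℤ} {d : ℤ}
    {f : (ι → 𝕜) → F} (hf : IsWeightedHomogeneous w d f) {v : ι → 𝕜}
    (hv : DifferentiableAt 𝕜 f v) :
    fderiv 𝕜 f v (fun i => w i * v i) = (d : 𝕜) • f v := by
  have := Fintype.ofFinite ι
  have along_orbit : HasDerivAt (fun c : 𝕜 => f fun i => c ^ w i * v i)
      (fderiv 𝕜 f v fun i => w i * v i) 1 :=
    hv.hasFDerivAt.comp_hasDerivAt_of_eq 1 (hasDerivAt_pi_zpow_mul_one w v) (by simp)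
  have by_homogeneity : HasDerivAt (fun c : 𝕜 => c ^ d • f v) ((d : 𝕜) • f v) 1 := by
    simpa using (hasDerivAt_zpow d (1 : 𝕜) (Or.inl one_ne_zero)).smul_const (f v)
  have orbit_eq : (fun c : 𝕜 => f fun i => c ^ w i * v i) =ᶠ[nhds 1] fun c => c ^ d • f v :=
    (eventually_ne_nhds one_ne_zero).mono fun c hc => hf c hc v
  exact along_orbit.unique (by_homogeneity.congr_of_eventuallyEq orbit_eq)

theorem IsWeightedHomogeneous.sum_smul_fderiv_single [Fintype ι] [DecidableEq ι]
    {w : ι → ℤ} {d : ℤ} {f : (ι → 𝕜) → F} (hf : IsWeightedHomogeneous w d f) {v : ι → 𝕜}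
    (hv : DifferentiableAt 𝕜 f v) :
    ∑ i, (w i * v i) • fderiv 𝕜 f v (Pi.single i 1) = (d : 𝕜) • f v := by
  rw [← hf.fderiv_apply_weighted hv, ← Finset.univ_sum_single fun i => (w i : 𝕜) * v i, map_sum]
  refine Finset.sum_congr rfl fun i _ => ?_
  rw [← map_smul, ← Pi.single_smul, smul_eq_mul, mul_one]

end Euler

theorem jd_eq_fderiv_single {L : (Fin 8 → ℝ) → ℝ} {v : Fin 8 → ℝ} (hL : DifferentiableAt ℝ L v)
    (i : Fin 8) : jd i L v = fderiv ℝ L v (Pi.single i 1) :=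
  (hL.hasFDerivAt.comp_hasDerivAt_of_eq (v i) (hasDerivAt_update v i (v i)) (by simp)).deriv

/-- The weights of the jet coordinates `(x, y, u, p, q, r, s, t)` under the second prolongation of
the field `a x ∂/∂x + b y ∂/∂y - (a + b) u ∂/∂u`: each derivative in `x` lowers the weight of `u`
by `a`, and each derivative in `y` lowers it by `b`. -/
def jetScalingWeight (a b : ℤ) : Fin 8 → ℤ :=
  ![a, b, -(a + b), -(2 * a + b), -(a + 2 * b), -(3 * a + b), -(2 * a + 2 * b), -(a + 3 * b)]

theorem titeicaLagrangian_isWeightedHomogeneous (α : ℝ) (a b : ℤ) :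
    IsWeightedHomogeneous (jetScalingWeight a b) (-(a + b)) (titeicaLagrangian α) := by
  intro c hc v
  have contact_scale :
      c ^ a * v 0 * (c ^ (-(2 * a + b)) * v 3) + c ^ b * v 1 * (c ^ (-(a + 2 * b)) * v 4)
        - c ^ (-(a + b)) * v 2 = c ^ (-(a + b)) * (v 0 * v 3 + v 1 * v 4 - v 2) := by
    have hxp : c ^ a * c ^ (-(2 * a + b)) = c ^ (-(a + b)) := by rw [← zpow_add₀ hc]; ring_nf
    have hyq : c ^ b * c ^ (-(a + 2 * b)) = c ^ (-(a + b)) := by rw [← zpow_add₀ hc]; ring_nf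
    linear_combination v 0 * v 3 * hxp + v 1 * v 4 * hyq
  have hessian_scale :
      (c ^ (-(2 * a + 2 * b)) * v 6) ^ 2 - c ^ (-(3 * a + b)) * v 5 * (c ^ (-(a + 3 * b)) * v 7)
        = (c ^ (-(a + b))) ^ 4 * (v 6 ^ 2 - v 5 * v 7) := by
    have hss : c ^ (-(2 * a + 2 * b)) = (c ^ (-(a + b))) ^ 2 := by
      rw [← zpow_natCast, ← zpow_mul]; ring_nf
    have hrt : c ^ (-(3 * a + b)) * c ^ (-(a + 3 * b)) = (c ^ (-(a + b))) ^ 4 := by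
      rw [← zpow_add₀ hc, ← zpow_natCast, ← zpow_mul]; ring_nf
    rw [hss]
    linear_combination -v 5 * v 7 * hrt
  have hpow : (c ^ (-(a + b))) ^ 4 ≠ 0 := pow_ne_zero 4 (zpow_ne_zero _ hc)
  change c ^ (-(a + b)) * v 2 * ((c ^ (-(2 * a + 2 * b)) * v 6) ^ 2
      - c ^ (-(3 * a + b)) * v 5 * (c ^ (-(a + 3 * b)) * v 7))
    / (c ^ a * v 0 * (c ^ (-(2 * a + b)) * v 3) + c ^ b * v 1 * (c ^ (-(a + 2 * b)) * v 4)
      - c ^ (-(a + b)) * v 2) ^ 4 - α * (c ^ (-(a + b)) * v 2)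
    = c ^ (-(a + b)) * titeicaLagrangian α v
  rw [contact_scale, hessian_scale, titeicaLagrangian, mul_pow, mul_left_comm,
    mul_div_mul_left _ _ hpow]
  ring

theorem differentiableAt_titeicaLagrangian (α : ℝ) {v : Fin 8 → ℝ}
    (hv : v 0 * v 3 + v 1 * v 4 - v 2 ≠ 0) : DifferentiableAt ℝ (titeicaLagrangian α) v := by
  unfold titeicaLagrangian
  fun_prop (disch := positivity)

theorem sum_jetScalingWeight_mul_jd_titeicaLagrangian (α : ℝ) (a b : ℤ) {v : Fin 8 → ℝ}
    (hv : v 0 * v 3 + v 1 * v 4 - v 2 ≠ 0) :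
    ∑ i, jetScalingWeight a b i * v i * jd i (titeicaLagrangian α) v
      = -(a + b) * titeicaLagrangian α v := by
  have hL := differentiableAt_titeicaLagrangian α hv
  simpa [jd_eq_fderiv_single hL] using
    (titeicaLagrangian_isWeightedHomogeneous α a b).sum_smul_fderiv_single hL

/-- The infinitesimal variational symmetry identities `pr²Y(L) + L·Div ξ = 0` for the
Țițeica Lagrangian and the scaling fields `Y₁ = x ∂/∂x − u ∂/∂u`, `Y₂ = y ∂/∂y − u ∂/∂u`
(part of Theorem 10 of the paper): wherever `x·p + y·q − u ≠ 0`,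
(i) `x·L_x − u·L_u − 2p·L_p − q·L_q − 3r·L_r − 2s·L_s − t·L_t + L = 0` and
(ii) `y·L_y − u·L_u − p·L_p − 2q·L_q − r·L_r − 2s·L_s − 3t·L_t + L = 0`. -/
theorem titeica_variational_symmetry_scaling (α : ℝ) (v : Fin 8 → ℝ)
    (hv : v 0 * v 3 + v 1 * v 4 - v 2 ≠ 0) :
    (v 0 * jd 0 (titeicaLagrangian α) v - v 2 * jd 2 (titeicaLagrangian α) v
      - 2 * v 3 * jd 3 (titeicaLagrangian α) v - v 4 * jd 4 (titeicaLagrangian α) v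
      - 3 * v 5 * jd 5 (titeicaLagrangian α) v - 2 * v 6 * jd 6 (titeicaLagrangian α) v
      - v 7 * jd 7 (titeicaLagrangian α) v + titeicaLagrangian α v = 0) ∧
    (v 1 * jd 1 (titeicaLagrangian α) v - v 2 * jd 2 (titeicaLagrangian α) v
      - v 3 * jd 3 (titeicaLagrangian α) v - 2 * v 4 * jd 4 (titeicaLagrangian α) v
      - v 5 * jd 5 (titeicaLagrangian α) v - 2 * v 6 * jd 6 (titeicaLagrangian α) v
      - 3 * v 7 * jd 7 (titeicaLagrangian α) v + titeicaLagrangian α v = 0) := by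
  have euler_x := sum_jetScalingWeight_mul_jd_titeicaLagrangian α 1 0 hv
  have euler_y := sum_jetScalingWeight_mul_jd_titeicaLagrangian α 0 1 hv
  simp only [jetScalingWeight, Fin.sum_univ_eight, Matrix.cons_val_zero, Matrix.cons_val_one,
    Matrix.cons_val, add_zero, zero_add, mul_one, mul_zero, Int.cast_zero, Int.cast_one,
    Int.cast_neg, Int.cast_ofNat] at euler_x euler_y
  constructor
  · linear_combination euler_x
  · linear_combination euler_y
end

section
/- Let a ∈ ℝ, a ≠ 0. The function u(x,y) = √(1 + a·x·y), defined on the open set D = {(x,y) ∈ ℝ² : 1 + a·x·y > 0}, satisfies the Țițeica PDE with parameter α = −a²/4 at every point of D. -/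
/-- The ordinary differential equation at `t` to which the Țițeica PDE reduces for functions
`f (x y)`, invariant under the flow of `x ∂/∂x - y ∂/∂y`. -/
def TiteicaReducedODE (α : ℝ) (f : ℝ → ℝ) (t : ℝ) : Prop :=
  -(deriv f t * (deriv f t + 2 * t * deriv (deriv f) t)) = α * (2 * t * deriv f t - f t) ^ 4

section CompMul

variable (f : ℝ → ℝ)

lemma pdx_comp_mul :
    pdx (fun q => f (q.1 * q.2)) = fun q => q.2 * deriv f (q.1 * q.2) := by
  funext q
  simpa only [pdx, mul_comm _ q.2, smul_eq_mul] using deriv_comp_mul_left q.2 f q.1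

lemma pdy_comp_mul :
    pdy (fun q => f (q.1 * q.2)) = fun q => q.1 * deriv f (q.1 * q.2) := by
  funext q
  exact deriv_comp_mul_left q.1 f q.2

lemma pdx_pdx_comp_mul (p : ℝ × ℝ) :
    pdx (pdx fun q => f (q.1 * q.2)) p = p.2 ^ 2 * deriv (deriv f) (p.1 * p.2) := by
  calc pdx (pdx fun q => f (q.1 * q.2)) p
      = pdx (fun q => q.2 * deriv f (q.1 * q.2)) p := by rw [pdx_comp_mul]
    _ = p.2 * pdx (fun q => deriv f (q.1 * q.2)) p := deriv_const_mul_field _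
    _ = p.2 ^ 2 * deriv (deriv f) (p.1 * p.2) := by rw [pdx_comp_mul]; ring

lemma pdy_pdy_comp_mul (p : ℝ × ℝ) :
    pdy (pdy fun q => f (q.1 * q.2)) p = p.1 ^ 2 * deriv (deriv f) (p.1 * p.2) := by
  calc pdy (pdy fun q => f (q.1 * q.2)) p
      = pdy (fun q => q.1 * deriv f (q.1 * q.2)) p := by rw [pdy_comp_mul]
    _ = p.1 * pdy (fun q => deriv f (q.1 * q.2)) p := deriv_const_mul_field _
    _ = p.1 ^ 2 * deriv (deriv f) (p.1 * p.2) := by rw [pdy_comp_mul]; ring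

variable {f}

lemma pdy_pdx_comp_mul {p : ℝ × ℝ} (hf : DifferentiableAt ℝ (deriv f) (p.1 * p.2)) :
    pdy (pdx fun q => f (q.1 * q.2)) p
      = deriv f (p.1 * p.2) + p.1 * p.2 * deriv (deriv f) (p.1 * p.2) := by
  have hf' : DifferentiableAt ℝ (fun y => deriv f (p.1 * y)) p.2 :=
    hf.comp p.2 (differentiableAt_id.const_mul p.1)
  calc pdy (pdx fun q => f (q.1 * q.2)) p
      = pdy (fun q => q.2 * deriv f (q.1 * q.2)) p := by rw [pdx_comp_mul]
    _ = 1 * deriv f (p.1 * p.2) + p.2 * pdy (fun q => deriv f (q.1 * q.2)) p :=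
      ((hasDerivAt_id p.2).mul hf'.hasDerivAt).deriv
    _ = deriv f (p.1 * p.2) + p.1 * p.2 * deriv (deriv f) (p.1 * p.2) := by
      rw [pdy_comp_mul]; ring

theorem titeicaPDE_comp_mul_iff {α : ℝ} {p : ℝ × ℝ}
    (hf : DifferentiableAt ℝ (deriv f) (p.1 * p.2)) :
    TiteicaPDE α (fun q => f (q.1 * q.2)) p ↔ TiteicaReducedODE α f (p.1 * p.2) := by
  rw [TiteicaPDE, TiteicaReducedODE, pdx_pdx_comp_mul, pdy_pdy_comp_mul, pdy_pdx_comp_mul hf,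
    pdx_comp_mul, pdy_comp_mul]
  ring_nf

end CompMul

section SqrtAffine

variable {a b t : ℝ}

lemma hasDerivAt_sqrt_add_mul (ht : 0 < b + a * t) :
    HasDerivAt (fun τ => √(b + a * τ)) (a / (2 * √(b + a * t))) t := by
  have affine : HasDerivAt (fun τ => b + a * τ) a t :=
    (hasDerivAt_const_mul a).const_add b
  exact affine.sqrt ht.ne'

lemma hasDerivAt_deriv_sqrt_add_mul (ht : 0 < b + a * t) :
    HasDerivAt (deriv fun τ => √(b + a * τ)) (-a ^ 2 / (4 * √(b + a * t) ^ 3)) t := by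
  have hs : √(b + a * t) ≠ 0 := (Real.sqrt_pos.2 ht).ne'
  have pos_near : ∀ᶠ τ in nhds t, 0 < b + a * τ :=
    ContinuousAt.eventually_lt (by fun_prop) (by fun_prop) ht
  have deriv_eq : deriv (fun τ => √(b + a * τ)) =ᶠ[nhds t] fun τ => a / (2 * √(b + a * τ)) :=
    pos_near.mono fun τ hτ => (hasDerivAt_sqrt_add_mul hτ).deriv
  have quotient := (hasDerivAt_const t a).div
    ((hasDerivAt_sqrt_add_mul ht).const_mul 2) (mul_ne_zero two_ne_zero hs)
  refine (quotient.congr_of_eventuallyEq deriv_eq).congr_deriv ?_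
  field_simp
  ring

theorem titeicaReducedODE_sqrt_add_mul (hb : b ≠ 0) (ht : 0 < b + a * t) :
    TiteicaReducedODE (-a ^ 2 / (4 * b ^ 3)) (fun τ => √(b + a * τ)) t := by
  rw [TiteicaReducedODE, (hasDerivAt_deriv_sqrt_add_mul ht).deriv,
    (hasDerivAt_sqrt_add_mul ht).deriv]
  have hs : √(b + a * t) ≠ 0 := (Real.sqrt_pos.2 ht).ne'
  have hsq : √(b + a * t) ^ 2 = b + a * t := Real.sq_sqrt ht.le
  generalize √(b + a * t) = s at hs hsq ⊢
  have hessian : -(a / (2 * s) * (a / (2 * s) + 2 * t * (-a ^ 2 / (4 * s ^ 3))))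
      = -a ^ 2 * b / (4 * s ^ 4) := by
    field_simp
    linear_combination (-4 * a ^ 2) * hsq
  have legendre : 2 * t * (a / (2 * s)) - s = -b / s := by
    field_simp
    linear_combination -hsq
  rw [hessian, legendre]
  field_simp

end SqrtAffine

/-- For `a ≠ 0`, the function `u(x,y) = √(1 + a·x·y)` solves the Țițeica PDE with
parameter `α = −a²/4` on the open set `{1 + a·x·y > 0}` (Section 8 of the paper). -/
theorem titeica_solution_sqrt_xy (a : ℝ) (ha : a ≠ 0) :
    ∀ p : ℝ × ℝ, 1 + a * (p.1 * p.2) > 0 →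
      TiteicaPDE (-a ^ 2 / 4) (fun q : ℝ × ℝ => Real.sqrt (1 + a * (q.1 * q.2))) p := by
  intro p hp
  have ode : TiteicaReducedODE (-a ^ 2 / 4) (fun t => √(1 + a * t)) (p.1 * p.2) := by
    simpa only [one_pow, mul_one] using titeicaReducedODE_sqrt_add_mul one_ne_zero hp
  exact (titeicaPDE_comp_mul_iff (hasDerivAt_deriv_sqrt_add_mul hp).differentiableAt).2 ode
end

section
/- Let a ∈ ℝ, a ≠ 0. The function u(x,y) = √(1 + a·(x² + y²)), defined on the open set D = {(x,y) ∈ ℝ² : 1 + a·(x² + y²) > 0}, satisfies the Țițeica PDE with parameter α = a² at every point of D. -/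
/-!
With `u² = F = k + Q` for the quadratic form `Q = a x² + 2 b x y + c y²`, we have `∇u = ∇F / (2u)`.
Euler's identity for `Q` gives `x u_x + y u_y - u = (Q - F) / u = -k / u`, while the Hessian
determinant of `u` is `(a c - b²) (F - Q) F / u⁶ = k (a c - b²) / u⁴`. Both sides of the equation
are therefore multiples of `u⁻⁴`, and they agree when `α k³ = a c - b²`.
-/

open Filter Topology

theorem pdx_congr_of_eventuallyEq {u v : ℝ × ℝ → ℝ} {p : ℝ × ℝ} (h : u =ᶠ[𝓝 p] v) :
    pdx u p = pdx v p := by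
  have slice : Tendsto (fun x : ℝ => (x, p.2)) (𝓝 p.1) (𝓝 p) :=
    Continuous.tendsto (by fun_prop) p.1
  exact (h.comp_tendsto slice).deriv_eq

theorem pdy_congr_of_eventuallyEq {u v : ℝ × ℝ → ℝ} {p : ℝ × ℝ} (h : u =ᶠ[𝓝 p] v) :
    pdy u p = pdy v p := by
  have slice : Tendsto (fun y : ℝ => (p.1, y)) (𝓝 p.2) (𝓝 p) :=
    Continuous.tendsto (by fun_prop) p.2
  exact (h.comp_tendsto slice).deriv_eq

theorem hasDerivAt_sqrt_of_two_mul {f : ℝ → ℝ} {m t : ℝ} (hf : HasDerivAt f (2 * m) t)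
    (ht : f t ≠ 0) : HasDerivAt (fun s => √(f s)) (m / √(f t)) t :=
  (hf.sqrt ht).congr_deriv (mul_div_mul_left _ _ two_ne_zero)

theorem hasDerivAt_div_sqrt {f g : ℝ → ℝ} {g' m t : ℝ} (hg : HasDerivAt g g' t)
    (hf : HasDerivAt f (2 * m) t) (ht : 0 < f t) :
    HasDerivAt (fun s => g s / √(f s)) ((g' * f t - g t * m) / √(f t) ^ 3) t := by
  have hs : √(f t) ≠ 0 := (Real.sqrt_pos.2 ht).ne'
  refine (hg.div (hasDerivAt_sqrt_of_two_mul hf ht.ne') hs).congr_deriv ?_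
  field_simp
  rw [Real.sq_sqrt ht.le]

/-- The inhomogeneous quadratic `k + a x² + 2 b x y + c y²`. Its lack of linear terms makes the
quadric `u² = quadric k a b c (x, y)` centred at the origin; the factor `2` makes `a c - b²` the
determinant of the quadratic form. -/
def quadric (k a b c : ℝ) (p : ℝ × ℝ) : ℝ :=
  k + a * p.1 ^ 2 + 2 * b * p.1 * p.2 + c * p.2 ^ 2

namespace quadric

variable {k a b c : ℝ} {p : ℝ × ℝ}

theorem eq_add_mul_sq_add_sq : quadric k a 0 a p = k + a * (p.1 ^ 2 + p.2 ^ 2) := by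
  rw [quadric]
  ring

theorem hasDerivAt_fst : HasDerivAt (fun x => quadric k a b c (x, p.2))
    (2 * (a * p.1 + b * p.2)) p.1 := by
  have h := ((((hasDerivAt_pow 2 p.1).const_mul a).const_add k).add
    (((hasDerivAt_id p.1).const_mul (2 * b)).mul_const p.2)).add_const (c * p.2 ^ 2)
  exact h.congr_deriv (by push_cast; ring)

theorem hasDerivAt_snd : HasDerivAt (fun y => quadric k a b c (p.1, y))
    (2 * (b * p.1 + c * p.2)) p.2 := by
  have h := (((hasDerivAt_id p.2).const_mul (2 * b * p.1)).const_add (k + a * p.1 ^ 2)).add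
    ((hasDerivAt_pow 2 p.2).const_mul c)
  exact h.congr_deriv (by push_cast; ring)

theorem eventually_pos (hp : 0 < quadric k a b c p) : ∀ᶠ q in 𝓝 p, 0 < quadric k a b c q := by
  have hc : Continuous (quadric k a b c) := by unfold quadric; fun_prop
  exact hc.continuousAt.eventually (lt_mem_nhds hp)

theorem pdx_sqrt (hp : 0 < quadric k a b c p) :
    pdx (fun q => √(quadric k a b c q)) p = (a * p.1 + b * p.2) / √(quadric k a b c p) :=
  (hasDerivAt_sqrt_of_two_mul hasDerivAt_fst hp.ne').deriv

theorem pdy_sqrt (hp : 0 < quadric k a b c p) :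
    pdy (fun q => √(quadric k a b c q)) p = (b * p.1 + c * p.2) / √(quadric k a b c p) :=
  (hasDerivAt_sqrt_of_two_mul hasDerivAt_snd hp.ne').deriv

theorem pdx_pdx_sqrt (hp : 0 < quadric k a b c p) :
    pdx (pdx fun q => √(quadric k a b c q)) p =
      (a * quadric k a b c p - (a * p.1 + b * p.2) ^ 2) / √(quadric k a b c p) ^ 3 := by
  have hg : HasDerivAt (fun x => a * x + b * p.2) a p.1 := by
    simpa using ((hasDerivAt_id p.1).const_mul a).add_const (b * p.2)
  rw [pdx_congr_of_eventuallyEq ((eventually_pos hp).mono fun _ => pdx_sqrt), sq]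
  exact (hasDerivAt_div_sqrt hg hasDerivAt_fst hp).deriv

theorem pdy_pdy_sqrt (hp : 0 < quadric k a b c p) :
    pdy (pdy fun q => √(quadric k a b c q)) p =
      (c * quadric k a b c p - (b * p.1 + c * p.2) ^ 2) / √(quadric k a b c p) ^ 3 := by
  have hg : HasDerivAt (fun y => b * p.1 + c * y) c p.2 := by
    simpa using ((hasDerivAt_id p.2).const_mul c).const_add (b * p.1)
  rw [pdy_congr_of_eventuallyEq ((eventually_pos hp).mono fun _ => pdy_sqrt), sq]
  exact (hasDerivAt_div_sqrt hg hasDerivAt_snd hp).deriv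

theorem pdy_pdx_sqrt (hp : 0 < quadric k a b c p) :
    pdy (pdx fun q => √(quadric k a b c q)) p =
      (b * quadric k a b c p - (a * p.1 + b * p.2) * (b * p.1 + c * p.2)) /
        √(quadric k a b c p) ^ 3 := by
  have hg : HasDerivAt (fun y => a * p.1 + b * y) b p.2 := by
    simpa using ((hasDerivAt_id p.2).const_mul b).const_add (a * p.1)
  rw [pdy_congr_of_eventuallyEq ((eventually_pos hp).mono fun _ => pdx_sqrt)]
  exact (hasDerivAt_div_sqrt hg hasDerivAt_snd hp).deriv

theorem euler_sub_sqrt (hp : 0 < quadric k a b c p) :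
    p.1 * pdx (fun q => √(quadric k a b c q)) p + p.2 * pdy (fun q => √(quadric k a b c q)) p -
      √(quadric k a b c p) = -k / √(quadric k a b c p) := by
  have hs : √(quadric k a b c p) ≠ 0 := (Real.sqrt_pos.2 hp).ne'
  rw [pdx_sqrt hp, pdy_sqrt hp]
  field_simp
  rw [Real.sq_sqrt hp.le, quadric]
  ring

theorem hessian_det_sqrt (hp : 0 < quadric k a b c p) :
    pdx (pdx fun q => √(quadric k a b c q)) p * pdy (pdy fun q => √(quadric k a b c q)) p -
      pdy (pdx fun q => √(quadric k a b c q)) p ^ 2 =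
        k * (a * c - b ^ 2) / √(quadric k a b c p) ^ 4 := by
  have hs : √(quadric k a b c p) ≠ 0 := (Real.sqrt_pos.2 hp).ne'
  rw [pdx_pdx_sqrt hp, pdy_pdy_sqrt hp, pdy_pdx_sqrt hp]
  field_simp
  rw [Real.sq_sqrt hp.le, quadric]
  ring

end quadric

theorem titeica_solution_sqrt_r2_general {k a b c α : ℝ} (hα : α * k ^ 3 = a * c - b ^ 2)
    {p : ℝ × ℝ} (hp : 0 < quadric k a b c p) :
    TiteicaPDE α (fun q => √(quadric k a b c q)) p := by
  rw [TiteicaPDE, quadric.hessian_det_sqrt hp, quadric.euler_sub_sqrt hp, ← hα]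
  ring

/-- For `a ≠ 0`, the function `u(x,y) = √(1 + a·(x² + y²))` solves the Țițeica PDE with
parameter `α = a²` on the open set `{1 + a·(x² + y²) > 0}` (Section 8 of the paper). -/
theorem titeica_solution_sqrt_r2 (a : ℝ) (ha : a ≠ 0) :
    ∀ p : ℝ × ℝ, 1 + a * (p.1 ^ 2 + p.2 ^ 2) > 0 →
      TiteicaPDE (a ^ 2) (fun q : ℝ × ℝ => Real.sqrt (1 + a * (q.1 ^ 2 + q.2 ^ 2))) p := by
  intro p hp
  simp only [← quadric.eq_add_mul_sq_add_sq] at hp ⊢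
  exact titeica_solution_sqrt_r2_general (by ring) hp
end
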